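/- For every critical threshold c > 0 (e.g. the failure threshold 0.2 mm or the optimal intervention level 0.18 mm) there exists a unique time t, and this t satisfies t > γ₀, such that d(t) = c; that is, the thickness loss reaches every positive level exactly once. -/

import Mathlib

/-- The thickness-loss function of the corrosion model. -/
noncomputable def thicknessLoss (ρ η γ₀ : ℝ) (t : ℝ) : ℝ :=
  if t ≤ γ₀ then 0 else ρ * (t - (γ₀ + η) + η * Real.exp (-(t - γ₀) / η))

theorem aux_strict (ρ η γ₀ : ℝ) (hρ : 0 < ρ) (hη : 0 < η) {s t : ℝ} (hs : γ₀ < s)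
    (hst : s < t) : thicknessLoss ρ η γ₀ s < thicknessLoss ρ η γ₀ t := by
  unfold thicknessLoss
  rw [if_neg (not_le.mpr hs), if_neg (not_le.mpr (hs.trans hst))]
  apply mul_lt_mul_of_pos_left _ hρ
  have h1 : Real.exp (-(t - γ₀) / η) = Real.exp (-(s - γ₀) / η) * Real.exp (-(t - s) / η) := by
    rw [← Real.exp_add]
    congr 1
    ring
  have h0 : -(t - s) / η ≠ 0 := (div_neg_of_neg_of_pos (by linarith) hη).ne
  have h2 := Real.add_one_lt_exp h0
  have h3 : Real.exp (-(s - γ₀) / η) ≤ 1 :=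
    Real.exp_le_one_iff.mpr (div_neg_of_neg_of_pos (by linarith) hη).le
  have h4 := Real.exp_pos (-(s - γ₀) / η)
  rw [h1]
  set a := Real.exp (-(s - γ₀) / η)
  set b := Real.exp (-(t - s) / η)
  have h5 : -(t - s) + η < η * b := by
    have := mul_lt_mul_of_pos_left h2 hη
    have e : η * (-(t - s) / η + 1) = -(t - s) + η := by field_simp
    linarith
  nlinarith [mul_lt_mul_of_pos_left h5 h4, mul_nonneg (sub_nonneg.mpr h3) (sub_pos.mpr hst).le]

/-- the thickness loss reaches every positive level `c` exactly once,
at a time `t > γ₀`. -/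
theorem thicknessLoss_hits_level (ρ η γ₀ : ℝ) (hρ : 0 < ρ) (hη : 0 < η) (hγ₀ : 0 ≤ γ₀) :
    ∀ c : ℝ, 0 < c →
      (∃! t : ℝ, thicknessLoss ρ η γ₀ t = c) ∧
      (∀ t : ℝ, thicknessLoss ρ η γ₀ t = c → γ₀ < t) := by
  intro c hc
  have hpos : ∀ t : ℝ, thicknessLoss ρ η γ₀ t = c → γ₀ < t := by
    intro t ht
    by_contra h
    rw [thicknessLoss, if_pos (not_lt.mp h)] at ht
    linarith
  refine ⟨?_, hpos⟩
  have hcont : Continuous fun t : ℝ => ρ * (t - (γ₀ + η) + η * Real.exp (-(t - γ₀) / η)) := by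
    fun_prop
  have hcρ : 0 < c / ρ := div_pos hc hρ
  have hle : γ₀ ≤ γ₀ + η + c / ρ := by linarith
  obtain ⟨t, ht, htc⟩ := intermediate_value_Icc hle hcont.continuousOn (show c ∈ Set.Icc _ _ by
    constructor
    · simp [hc.le]
    · have h := mul_pos hρ (mul_pos hη (Real.exp_pos (-(γ₀ + η + c / ρ - γ₀) / η)))
      have e : ρ * (c / ρ) = c := by field_simp
      linarith)
  have hne : ¬ t ≤ γ₀ := by
    intro h
    have : t = γ₀ := le_antisymm h ht.1
    subst this
    simp at htc
    linarith
  have htl : thicknessLoss ρ η γ₀ t = c := by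
    rw [thicknessLoss, if_neg hne]
    exact htc
  refine ⟨t, htl, fun s hs => ?_⟩
  rcases lt_trichotomy s t with h | h | h
  · have := aux_strict ρ η γ₀ hρ hη (hpos s hs) h
    linarith
  · exact h
  · have := aux_strict ρ η γ₀ hρ hη (hpos t htl) h
    linarith
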